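/- arXiv:1101.2609 — 2 statements merged into one kernel-verified Lean document; each statement's English description precedes it below -/
import Mathlib

section
/- For all integers n, k with 0 < k < n, one has ∑_{j=0}^{n-k} C(n-k,j) · (-1)^j · E_{k+j,q^{-1}} = q^{-1} · ∑_{j=0}^{k} C(k,j) · (-1)^{k-j} · E_{n-j,q}. (Corollary 5 of the paper, k > 0 case, obtained by comparing two p-adic integral evaluations of the Bernstein polynomial B_{k,n}(x) weighted by q^x.) -/
/-!
Umbrally, a sequence `E` is the linear functional `L` on polynomials with `L (X ^ n) = E n`, and the
q-Euler recurrence says `q * L (p (X + 1)) + L p = 2 * p 0` for all `p`. The functional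
`p ↦ L' (p (1 - X))`, where `L'` belongs to `q⁻¹`, satisfies the same equation with right-hand side
`2 * q * p 2`. As `q + 1` is regular, such an equation determines the functional. Evaluation at `a`
has left-hand side `q * p (a + 1) + p a`, so comparing left-hand sides gives
`L' (p (1 - X)) = q⁻¹ * L p + 2 * p 1 - 2 * q⁻¹ * p 0`.
Take `p = X ^ (n - k) * (1 - X) ^ k`, a Bernstein polynomial up to a scalar.
-/

open Polynomial

section Semiring

variable {R M : Type*} [CommSemiring R] [AddCommMonoid M] [Module R M]

theorem map_taylor_X_pow (f : R[X] →ₗ[R] M) (r : R) (n : ℕ) :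
    f (taylor r (X ^ n)) =
      ∑ l ∈ Finset.range (n + 1), ((n.choose l : R) * r ^ (n - l)) • f (X ^ l) := by
  rw [taylor_X_pow, add_pow, map_sum]
  refine Finset.sum_congr rfl fun l _ => ?_
  rw [← map_smul, smul_eq_C_mul, C_mul, C_pow, C_eq_natCast]
  congr 1
  ring

/-- The operator sending a linear functional `f` to `p ↦ q • f (p (X + 1)) + f p`. The q-Euler
recurrence prescribes its value on the functional `X ^ n ↦ E n`. -/
noncomputable def twistedShift (q : R) : (R[X] →ₗ[R] M) →ₗ[R] (R[X] →ₗ[R] M) :=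
  q • LinearMap.lcomp R M (taylor 1) + LinearMap.id

theorem twistedShift_apply (q : R) (f : R[X] →ₗ[R] M) (p : R[X]) :
    twistedShift q f p = q • f (taylor 1 p) + f p :=
  rfl

theorem twistedShift_leval (q a : R) :
    twistedShift q (leval a) = q • leval (a + 1) + leval a := by
  refine LinearMap.ext fun p => ?_
  simp [twistedShift_apply, taylor_eval, add_comm]

/-- The umbral functional of a sequence `E`: the linear functional on `R[X]` replacing each power
`X ^ n` by `E n`. -/
noncomputable def umbral (E : ℕ → R) : R[X] →ₗ[R] R :=
  (basisMonomials R).constr R E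

theorem umbral_X_pow (E : ℕ → R) (n : ℕ) : umbral E (X ^ n) = E n := by
  simpa [umbral, monomial_one_right_eq_X_pow] using (basisMonomials R).constr_basis R E n

/-- `E` is a sequence of q-Euler numbers with parameter `q`. The initial value is given as
`(q + 1) * E 0 = 2` rather than `E 0 = 2 / (q + 1)`, to avoid division. -/
structure IsQEuler (q : R) (E : ℕ → R) : Prop where
  zero_eq : (q + 1) * E 0 = 2
  recurrence : ∀ n : ℕ, 1 ≤ n →
    q * ∑ l ∈ Finset.range (n + 1), (n.choose l : R) * E l + E n = 0

theorem IsQEuler.twistedShift_umbral {q : R} {E : ℕ → R} (hE : IsQEuler q E) :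
    twistedShift q (umbral E) = (2 : R) • leval 0 := by
  have on_X_pow (n : ℕ) :
      twistedShift q (umbral E) (X ^ n) = ((2 : R) • leval 0 : R[X] →ₗ[R] R) (X ^ n) := by
    simp only [twistedShift_apply, map_taylor_X_pow, umbral_X_pow, one_pow, mul_one, smul_eq_mul,
      LinearMap.smul_apply, leval_apply, eval_pow, eval_X]
    rcases n.eq_zero_or_pos with rfl | hn
    · simpa [add_mul] using hE.zero_eq
    · rw [hE.recurrence n hn, zero_pow hn.ne', mul_zero]
  ext n
  simpa [monomial_one_right_eq_X_pow] using on_X_pow n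

end Semiring

section Ring

variable {R M : Type*} [CommRing R] [AddCommGroup M] [Module R M]

theorem twistedShift_injective {q : R} (hq : IsSMulRegular M (q + 1)) :
    Function.Injective (twistedShift q : (R[X] →ₗ[R] M) →ₗ[R] (R[X] →ₗ[R] M)) := by
  refine (injective_iff_map_eq_zero _).mpr fun f hf => ?_
  have map_X_pow (n : ℕ) : f (X ^ n) = 0 := by
    induction n using Nat.strong_induction_on with
    | _ n ih =>
      have lower_terms : ∑ l ∈ Finset.range n,
          ((n.choose l : R) * 1 ^ (n - l)) • f (X ^ l) = 0 :=
        Finset.sum_eq_zero fun l hl => by rw [ih l (Finset.mem_range.mp hl), smul_zero]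
      have hfn : twistedShift q f (X ^ n) = 0 := by rw [hf, LinearMap.zero_apply]
      rw [twistedShift_apply, map_taylor_X_pow, Finset.sum_range_succ, lower_terms] at hfn
      refine hq.right_eq_zero_of_smul ?_
      simpa [add_smul] using hfn
  ext n
  simpa [monomial_one_right_eq_X_pow] using map_X_pow n

/-- The substitution `p ↦ p (1 - X)`, which relates the parameters `q` and `q⁻¹`. -/
noncomputable def oneSubX : R[X] →ₗ[R] R[X] :=
  (aeval (1 - X : R[X])).toLinearMap

theorem oneSubX_apply (p : R[X]) : oneSubX p = p.comp (1 - X) := by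
  rw [oneSubX, AlgHom.toLinearMap_apply, comp_eq_aeval]

theorem taylor_oneSubX_taylor (r : R) (p : R[X]) :
    taylor r (oneSubX (taylor r p)) = oneSubX p := by
  simp only [oneSubX_apply, taylor_apply, comp_assoc]
  congr 1
  simp only [sub_comp, one_comp, add_comp, X_comp, C_comp]
  ring

theorem twistedShift_comp_oneSubX {q q' : R} (hqq' : q * q' = 1) (f : R[X] →ₗ[R] M) :
    twistedShift q (f ∘ₗ oneSubX) = q • twistedShift q' f ∘ₗ oneSubX ∘ₗ taylor 1 := by
  refine LinearMap.ext fun p => ?_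
  simp only [twistedShift_apply, LinearMap.comp_apply, LinearMap.smul_apply,
    taylor_oneSubX_taylor, smul_add, smul_smul, hqq', one_smul]
  exact add_comm _ _

theorem leval_comp_oneSubX_comp_taylor (a r : R) :
    leval a ∘ₗ oneSubX ∘ₗ taylor r = leval (1 - a + r) := by
  refine LinearMap.ext fun p => ?_
  simp [oneSubX_apply, taylor_apply]

theorem IsQEuler.umbral_comp_oneSubX {q q' : R} (hqq' : q * q' = 1)
    (hq : IsLeftRegular (q + 1)) {E E' : ℕ → R} (hE : IsQEuler q E) (hE' : IsQEuler q' E') :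
    umbral E' ∘ₗ oneSubX = q' • umbral E + (2 : R) • leval 1 - (2 * q') • leval 0 := by
  refine twistedShift_injective hq.isSMulRegular ?_
  calc twistedShift q (umbral E' ∘ₗ oneSubX)
      = (2 * q) • leval 2 := by
        rw [twistedShift_comp_oneSubX hqq', hE'.twistedShift_umbral, LinearMap.smul_comp,
          leval_comp_oneSubX_comp_taylor, smul_smul, mul_comm q]
        norm_num
    _ = q' • (2 : R) • leval 0 + (2 : R) • (q • leval 2 + leval 1)
          - (2 * q') • (q • leval 1 + leval 0) := by
        linear_combination (norm := module) (2 * hqq') • (leval 1 : R[X] →ₗ[R] R)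
    _ = twistedShift q (q' • umbral E + (2 : R) • leval 1 - (2 * q') • leval 0) := by
        simp only [map_sub, map_add, map_smul, hE.twistedShift_umbral, twistedShift_leval,
          zero_add, one_add_one_eq_two]

theorem umbral_X_pow_mul_one_sub_X_pow (E : ℕ → R) (a b : ℕ) :
    umbral E (X ^ a * (1 - X) ^ b) =
      ∑ j ∈ Finset.range (b + 1), (b.choose j : R) * (-1) ^ j * E (a + j) := by
  rw [sub_eq_neg_add, add_pow, Finset.mul_sum, map_sum]
  refine Finset.sum_congr rfl fun j _ => ?_
  rw [← umbral_X_pow E (a + j), ← smul_eq_mul (_ * _) (umbral E _), ← map_smul, smul_eq_C_mul]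
  congr 1
  simp only [C_mul, C_pow, C_neg, C_1, C_eq_natCast, one_pow, neg_pow (X : R[X]) j]
  ring

theorem oneSubX_X_pow_mul_one_sub_X_pow (a b : ℕ) :
    oneSubX (X ^ a * (1 - X) ^ b : R[X]) = X ^ b * (1 - X) ^ a := by
  simp [oneSubX_apply, mul_comm]

theorem qEuler_bernstein_kpos_general {q q' : R} (hqq' : q * q' = 1)
    (hq : IsLeftRegular (q + 1)) {E E' : ℕ → R} (hE : IsQEuler q E) (hE' : IsQEuler q' E')
    {n k : ℕ} (hkn : k ≤ n) :
    ∑ j ∈ Finset.range (n - k + 1), ((n - k).choose j : R) * (-1) ^ j * E' (k + j)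
      = q' * ∑ j ∈ Finset.range (k + 1), (k.choose j : R) * (-1) ^ (k - j) * E (n - j)
        + 2 * 0 ^ k - 2 * q' * 0 ^ (n - k) := by
  have reflection := LinearMap.congr_fun (hE.umbral_comp_oneSubX hqq' hq hE')
    (X ^ (n - k) * (1 - X) ^ k)
  rw [LinearMap.comp_apply, oneSubX_X_pow_mul_one_sub_X_pow] at reflection
  have reversed_sum :
      ∑ j ∈ Finset.range (k + 1), (k.choose j : R) * (-1) ^ j * E (n - k + j) =
        ∑ j ∈ Finset.range (k + 1), (k.choose j : R) * (-1) ^ (k - j) * E (n - j) := by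
    rw [← Finset.sum_flip]
    refine Finset.sum_congr rfl fun j hj => ?_
    have hjk : j ≤ k := Finset.mem_range_succ_iff.mp hj
    rw [Nat.choose_symm hjk, show n - k + (k - j) = n - j by lia]
  simpa [umbral_X_pow_mul_one_sub_X_pow, reversed_sum] using reflection

end Ring

theorem isQEuler_of_eq_div {K : Type*} [Field K] {q : K} (hq : q + 1 ≠ 0) {E : ℕ → K}
    (hE0 : E 0 = 2 / (q + 1))
    (hE : ∀ n : ℕ, 1 ≤ n →
      q * ∑ l ∈ Finset.range (n + 1), (n.choose l : K) * E l + E n = 0) :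
    IsQEuler q E where
  zero_eq := by rw [hE0, mul_div_cancel₀ _ hq]
  recurrence := hE

/-- Corollary 5 (k > 0 case): for `0 < k < n`,
`∑_{j=0}^{n-k} C(n-k,j)·(-1)^j·E_{k+j,q⁻¹} = q⁻¹·∑_{j=0}^{k} C(k,j)·(-1)^{k-j}·E_{n-j,q}`.
`E : ℕ → K` are the q-Euler numbers for `q`, `E' : ℕ → K` those for `q⁻¹`. -/
theorem qEuler_bernstein_kpos {K : Type*} [Field K] [CharZero K]
    (q : K) (hq0 : q ≠ 0) (hq1 : q ≠ -1)
    (E E' : ℕ → K)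
    (hE0 : E 0 = 2 / (q + 1))
    (hE : ∀ n : ℕ, 1 ≤ n →
      q * ∑ l ∈ Finset.range (n + 1), (n.choose l : K) * E l + E n = 0)
    (hE'0 : E' 0 = 2 / (q⁻¹ + 1))
    (hE' : ∀ n : ℕ, 1 ≤ n →
      q⁻¹ * ∑ l ∈ Finset.range (n + 1), (n.choose l : K) * E' l + E' n = 0) :
    ∀ n k : ℕ, 0 < k → k < n →
      ∑ j ∈ Finset.range (n - k + 1), ((n - k).choose j : K) * (-1 : K) ^ j * E' (k + j)
        = q⁻¹ * ∑ j ∈ Finset.range (k + 1),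
            (k.choose j : K) * (-1 : K) ^ (k - j) * E (n - j) := by
  intro n k hk hkn
  have hq : q + 1 ≠ 0 := mt eq_neg_of_add_eq_zero_left hq1
  have hq' : q⁻¹ + 1 ≠ 0 :=
    mt eq_neg_of_add_eq_zero_left (by rwa [inv_eq_iff_eq_inv, inv_neg_one])
  simpa only [zero_pow hk.ne', zero_pow (Nat.sub_pos_of_lt hkn).ne', mul_zero, add_zero, sub_zero]
    using qEuler_bernstein_kpos_general (mul_inv_cancel₀ hq0) (IsRegular.of_ne_zero hq).left
      (isQEuler_of_eq_div hq hE0 hE) (isQEuler_of_eq_div hq' hE'0 hE') hkn.le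
end

section
/- For all integers m, n ≥ 0 with m + n > 0, one has ∑_{j=0}^{n+m} C(n+m, j) · (-1)^j · E_{j, q^{-1}} = 2 + q^{-1} · E_{n+m, q}. (Corollary 7 of the paper, k = 0 case.) -/
/-!
Umbrally, `E` is the linear functional `L` on polynomials with `L (X ^ n) = E n`, and the recurrence
becomes the functional equation `q * L (p (X + 1)) + L p = 2 * p 0`. Since the shift
`p (X) ↦ p (X + 1)` preserves leading terms, this equation has at most one solution when `q + 1` is
not a zero divisor. The substitution `X ↦ -X` conjugates the shift to its inverse, so if `L'` is the
functional for `q⁻¹` then `p ↦ 2 * p 0 - L' (p (-X))` satisfies the equation for `q`, and hence is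
`L`. Evaluating at `p = (X + 1) ^ n` gives the identity.
-/

open Polynomial

section UmbralEval

variable {R : Type*} [CommSemiring R]

/-- The umbral evaluation of a polynomial at a sequence `a`: the linear functional that lowers the
exponent `X ^ n` to the index `a n`. -/
noncomputable def umbralEval (a : ℕ → R) : R[X] →ₗ[R] R :=
  lsum fun n => LinearMap.toSpanSingleton R R (a n)

@[simp]
theorem umbralEval_monomial (a : ℕ → R) (n : ℕ) (c : R) :
    umbralEval a (monomial n c) = c * a n := by
  simp [umbralEval, lsum_apply, sum_monomial_index]

@[simp]
theorem umbralEval_X_pow (a : ℕ → R) (n : ℕ) : umbralEval a (X ^ n) = a n := by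
  rw [X_pow_eq_monomial, umbralEval_monomial, one_mul]

theorem umbralEval_C_mul_X_add_one_pow (a : ℕ → R) (c : R) (n : ℕ) :
    umbralEval a ((C c * X + 1) ^ n) =
      ∑ l ∈ Finset.range (n + 1), (n.choose l : R) * c ^ l * a l := by
  rw [add_pow, map_sum]
  refine Finset.sum_congr rfl fun l _ => ?_
  have term_eq_monomial : (C c * X) ^ l * 1 ^ (n - l) * (n.choose l : R[X]) =
      monomial l ((n.choose l : R) * c ^ l) := by
    rw [← C_mul_X_pow_eq_monomial, C_mul, C_pow, C_eq_natCast]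
    ring
  rw [term_eq_monomial, umbralEval_monomial]

end UmbralEval

theorem eq_zero_of_smul_map_taylor_add_eq_zero {R M : Type*} [CommRing R] [AddCommGroup M]
    [Module R M] {q : R} (hq : IsSMulRegular M (q + 1)) (c : R) {D : R[X] →ₗ[R] M}
    (hD : ∀ p, q • D (taylor c p) + D p = 0) : D = 0 := by
  refine LinearMap.ext fun p => ?_
  induction p using degree_lt_wf.induction with
  | h p ih =>
    have map_taylor_sub : D (taylor c p - p) = 0 := by
      rcases eq_or_ne p 0 with rfl | hp
      · simp only [map_zero, sub_zero]
      · refine ih _ ?_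
        rw [← degree_taylor p c]
        exact degree_sub_lt_left (degree_taylor p c) ((taylor_eq_zero c p).not.mpr hp)
          (leadingCoeff_taylor c p)
    rw [map_sub, sub_eq_zero] at map_taylor_sub
    refine hq.right_eq_zero_of_smul ?_
    rw [add_smul, one_smul]
    simpa only [map_taylor_sub] using hD p

/-- The sequence `E` satisfies the umbral recurrence `q * (E + 1) ^ n + E ^ n = 2 * 0 ^ n` of the
`q`-Euler numbers. The initial value is written without division, so that the notion makes sense
over any commutative ring. -/
structure IsQEuler_s8 {R : Type*} [CommSemiring R] (q : R) (E : ℕ → R) : Prop where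
  zero : (q + 1) * E 0 = 2
  recurrence : ∀ n : ℕ, 1 ≤ n →
    q * ∑ l ∈ Finset.range (n + 1), (n.choose l : R) * E l + E n = 0

namespace IsQEuler_s8

theorem mul_umbralEval_taylor_one_add {R : Type*} [CommSemiring R] {q : R} {E : ℕ → R}
    (hE : IsQEuler_s8 q E) (p : R[X]) :
    q * umbralEval E (taylor 1 p) + umbralEval E p = 2 * p.eval 0 := by
  induction p using Polynomial.induction_on' with
  | add p₁ p₂ h₁ h₂ =>
    simp only [map_add, eval_add, mul_add, ← h₁, ← h₂]
    ring
  | monomial n a =>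
    have recurrence_at_pow : q * umbralEval E ((X + 1) ^ n) + E n = 2 * 0 ^ n := by
      have h := umbralEval_C_mul_X_add_one_pow E 1 n
      simp only [C_1, one_mul, one_pow, mul_one] at h
      rw [h]
      rcases n.eq_zero_or_pos with rfl | hn
      · simpa [add_mul] using hE.zero
      · rw [hE.recurrence n hn, zero_pow hn.ne', mul_zero]
    rw [taylor_monomial, C_1, ← smul_eq_C_mul, map_smul, smul_eq_mul, umbralEval_monomial,
      eval_monomial]
    calc q * (a * umbralEval E ((X + 1) ^ n)) + a * E n
        = a * (q * umbralEval E ((X + 1) ^ n) + E n) := by ring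
      _ = 2 * (a * 0 ^ n) := by rw [recurrence_at_pow]; ring

theorem of_zero_eq_div {K : Type*} [Field K] {q : K} (hq : q + 1 ≠ 0) {E : ℕ → K}
    (hE0 : E 0 = 2 / (q + 1))
    (hE : ∀ n : ℕ, 1 ≤ n →
      q * ∑ l ∈ Finset.range (n + 1), (n.choose l : K) * E l + E n = 0) : IsQEuler_s8 q E where
  zero := by rw [hE0, mul_div_cancel₀ _ hq]
  recurrence := hE

theorem umbralEval_comp_neg_X {R : Type*} [CommRing R] {q r : R} {E E' : ℕ → R}
    (hE : IsQEuler_s8 q E) (hE' : IsQEuler_s8 r E') (hqr : q * r = 1) (hq : IsSMulRegular R (q + 1))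
    (p : R[X]) : umbralEval E' (p.comp (-X)) = 2 * p.eval 0 - umbralEval E p := by
  let D : R[X] →ₗ[R] R :=
    umbralEval E' ∘ₗ (aeval (-X)).toLinearMap + umbralEval E - (2 : R) • leval 0
  have D_apply (p : R[X]) : D p = umbralEval E' (p.comp (-X)) + umbralEval E p - 2 * p.eval 0 := by
    simp [D, comp_eq_aeval]
  have D_eq_zero : D = 0 := by
    refine eq_zero_of_smul_map_taylor_add_eq_zero hq 1 fun p => ?_
    have shift_reflect : taylor 1 ((taylor 1 p).comp (-X)) = p.comp (-X) := by
      simp [taylor_apply, comp_assoc]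
    have hL := hE.mul_umbralEval_taylor_one_add p
    have hL' := hE'.mul_umbralEval_taylor_one_add ((taylor 1 p).comp (-X))
    rw [shift_reflect, eval_comp, eval_neg, eval_X, neg_zero] at hL'
    rw [D_apply, D_apply, smul_eq_mul]
    linear_combination q * hL' + hL - umbralEval E' (p.comp (-X)) * hqr
  have Dp_eq_zero : D p = 0 := by rw [D_eq_zero, LinearMap.zero_apply]
  linear_combination Dp_eq_zero - D_apply p

end IsQEuler_s8

theorem qEuler_bernstein_product_k0_general {R : Type*} [CommRing R] {q r : R} (hqr : q * r = 1)
    (hq : IsSMulRegular R (q + 1)) {E E' : ℕ → R} (hE : IsQEuler_s8 q E) (hE' : IsQEuler_s8 r E')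
    {n : ℕ} (hn : 0 < n) :
    ∑ j ∈ Finset.range (n + 1), (n.choose j : R) * (-1 : R) ^ j * E' j = 2 + r * E n := by
  have hrec : q * umbralEval E ((X + 1) ^ n) + E n = 0 := by
    simpa [hn.ne'] using hE.mul_umbralEval_taylor_one_add (X ^ n)
  calc ∑ j ∈ Finset.range (n + 1), (n.choose j : R) * (-1 : R) ^ j * E' j
      = umbralEval E' (((X + 1) ^ n).comp (-X)) := by
        rw [← umbralEval_C_mul_X_add_one_pow]; simp
    _ = 2 - umbralEval E ((X + 1) ^ n) := by
        rw [hE.umbralEval_comp_neg_X hE' hqr hq]; simp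
    _ = 2 + r * E n := by
        linear_combination umbralEval E ((X + 1) ^ n) * hqr - r * hrec

/-- Corollary 7 (k = 0 case): for `m + n > 0`,
`∑_{j=0}^{n+m} C(n+m,j)·(-1)^j·E_{j,q⁻¹} = 2 + q⁻¹·E_{n+m,q}`.
`E : ℕ → K` are the q-Euler numbers for `q`, `E' : ℕ → K` those for `q⁻¹`. -/
theorem qEuler_bernstein_product_k0 {K : Type*} [Field K] [CharZero K]
    (q : K) (hq0 : q ≠ 0) (hq1 : q ≠ -1)
    (E E' : ℕ → K)
    (hE0 : E 0 = 2 / (q + 1))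
    (hE : ∀ n : ℕ, 1 ≤ n →
      q * ∑ l ∈ Finset.range (n + 1), (n.choose l : K) * E l + E n = 0)
    (hE'0 : E' 0 = 2 / (q⁻¹ + 1))
    (hE' : ∀ n : ℕ, 1 ≤ n →
      q⁻¹ * ∑ l ∈ Finset.range (n + 1), (n.choose l : K) * E' l + E' n = 0) :
    ∀ m n : ℕ, 0 < m + n →
      ∑ j ∈ Finset.range (n + m + 1), ((n + m).choose j : K) * (-1 : K) ^ j * E' j
        = 2 + q⁻¹ * E (n + m) := by
  have hq : q + 1 ≠ 0 := fun h => hq1 (eq_neg_of_add_eq_zero_left h)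
  have hq' : q⁻¹ + 1 ≠ 0 := fun h => hq <| by linear_combination q * h - mul_inv_cancel₀ hq0
  exact fun m n hmn => qEuler_bernstein_product_k0_general (mul_inv_cancel₀ hq0)
    (IsSMulRegular.of_ne_zero hq) (.of_zero_eq_div hq hE0 hE) (.of_zero_eq_div hq' hE'0 hE')
    (by omega)
end
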